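/- Let F be a nonzero homogeneous polynomial of degree 3 in k[x₀,x₁,x₂,x₃] such that the cubic surface V(F) is smooth, and let A₁, A₂ ∈ GL₄(k) be reflections leaving V(F) invariant whose centers p₁ and p₂ are distinct points of ℙ³(k). Then the commutator A₁A₂A₁⁻¹A₂⁻¹ is a scalar matrix (i.e., the images of A₁ and A₂ in PGL₄(k) commute) if and only if the projective line through p₁ and p₂ is contained in V(F). -/

import Mathlib

open MvPolynomial Matrix

/-- The polynomial `F(A·x)`, obtained from `F` by substituting
`xᵢ ↦ ∑ⱼ Aᵢⱼ xⱼ`. -/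
noncomputable def substMatrix {k : Type*} [Field k] (A : Matrix (Fin 4) (Fin 4) k)
    (F : MvPolynomial (Fin 4) k) : MvPolynomial (Fin 4) k :=
  aeval (fun i => ∑ j, C (A i j) * X j) F

/-- A matrix `A` leaves the cubic surface `V(F)` invariant if `F(A·x) = λ·F(x)`
for some `λ ∈ kˣ`. -/
def LeavesInvariant {k : Type*} [Field k] (A : Matrix (Fin 4) (Fin 4) k)
    (F : MvPolynomial (Fin 4) k) : Prop :=
  ∃ lam : kˣ, substMatrix A F = (lam : k) • F

/-- `F` vanishes identically on the linear subspace `W ⊆ k⁴`. -/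
def VanishesOn {k : Type*} [Field k] (F : MvPolynomial (Fin 4) k)
    (W : Submodule k (Fin 4 → k)) : Prop :=
  ∀ x ∈ W, eval x F = 0

/-- `W` is (the cone over) a projective line contained in the surface `V(F)`. -/
def IsLineIn {k : Type*} [Field k] (F : MvPolynomial (Fin 4) k)
    (W : Submodule k (Fin 4 → k)) : Prop :=
  Module.finrank k W = 2 ∧ VanishesOn F W

/-- `L`, a 1-dimensional subspace of `k⁴` regarded as a point of `ℙ³(k)`, is an
Eckardt point of `V(F)`: at least three distinct projective lines contained in
`V(F)` pass through it. -/
def IsEckardtPoint {k : Type*} [Field k] (F : MvPolynomial (Fin 4) k)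
    (L : Submodule k (Fin 4 → k)) : Prop :=
  Module.finrank k L = 1 ∧
    ∃ W₁ W₂ W₃ : Submodule k (Fin 4 → k),
      W₁ ≠ W₂ ∧ W₁ ≠ W₃ ∧ W₂ ≠ W₃ ∧
      IsLineIn F W₁ ∧ IsLineIn F W₂ ∧ IsLineIn F W₃ ∧
      L ≤ W₁ ∧ L ≤ W₂ ∧ L ≤ W₃

/-!
A cubic form is the diagonal `x ↦ M x x x` of a trilinear form `M`, in every characteristic; write
`d_x` for its differential at `x`. A reflection `x ↦ x - f x • v` preserving the form up to a
factor in fact preserves it, since a smooth cubic cannot vanish on the mirror `ker f`. Expanding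
the invariance, the center `v` lies on the surface and its polar quadric `x ↦ d_x v` splits as
`f x * d_v x`. Polarizing this splitting on a line through two centers `v`, `w` contained in the
surface gives `f w • d_v = g v • d_w`. If `f w` or `g v` is nonzero, then all tangent hyperplanes
along the line coincide, and a quadratic equation produces a singular point on it. So the line is
contained in the surface if and only if `f w = 0` and `g v = 0`, and this is also the condition
for the two reflections to commute.
-/

open Module

lemma eq_zero_of_forall_linear_add_sq_add_cube_eq_zero {R : Type*} [CommRing R] [IsDomain R]
    [Infinite R] {a b c : R} (h : ∀ t : R, a * t + b * t ^ 2 + c * t ^ 3 = 0) : a = 0 := by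
  have hp : Polynomial.C a * Polynomial.X + Polynomial.C b * Polynomial.X ^ 2
      + Polynomial.C c * Polynomial.X ^ 3 = 0 :=
    Polynomial.funext fun t ↦ by simpa using h t
  simpa [Polynomial.coeff_X] using congrArg (Polynomial.coeff · 1) hp

lemma exists_nontrivial_zero_binary_quadratic {K : Type*} [Field K] [IsAlgClosed K] (a b c : K) :
    ∃ s t : K, ¬(s = 0 ∧ t = 0) ∧ s ^ 2 * a + s * t * b + t ^ 2 * c = 0 := by
  obtain rfl | ha := eq_or_ne a 0
  · exact ⟨1, 0, by simp, by simp⟩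
  · obtain ⟨s, hs⟩ := IsAlgClosed.exists_root
      (Polynomial.C a * Polynomial.X ^ 2 + Polynomial.C b * Polynomial.X + Polynomial.C c)
      (by rw [Polynomial.degree_quadratic ha]; decide)
    refine ⟨s, 1, by simp, ?_⟩
    simp only [Polynomial.IsRoot.def, Polynomial.eval_add, Polynomial.eval_mul,
      Polynomial.eval_C, Polynomial.eval_pow, Polynomial.eval_X] at hs
    linear_combination hs

/-- Trilinear forms on an `R`-module `V`. A cubic form is encoded as the diagonal of one, not
necessarily symmetric, so that the characteristics `2` and `3` are included. -/
abbrev TrilinearForm (R V : Type*) [CommRing R] [AddCommGroup V] [Module R V] :=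
  V →ₗ[R] V →ₗ[R] V →ₗ[R] R

namespace TrilinearForm

section CommRing

variable {R V : Type*} [CommRing R] [AddCommGroup V] [Module R V]

/-- The cubic form of a trilinear form, its restriction to the diagonal. -/
def cubic (M : TrilinearForm R V) (x : V) : R := M x x x

/-- The differential of the cubic form of `M` at the point `x`. -/
def differential (M : TrilinearForm R V) (x : V) : Dual R V :=
  M x x + (M x).flip x + (M.flip x).flip x

/-- The full polarization of the cubic form of `M`, the polar form of the quadratic map
`x ↦ M.differential x`. -/
def polar (M : TrilinearForm R V) (x y : V) : Dual R V :=
  M x y + M y x + (M x).flip y + (M y).flip x + (M.flip x).flip y + (M.flip y).flip x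

/-- The cubic hypersurface of `M` is nonsingular: the cubic form and its differential have no
common zero other than the origin. -/
def Nonsingular (M : TrilinearForm R V) : Prop :=
  ∀ x, M.cubic x = 0 → M.differential x = 0 → x = 0

/-- The hyperplane `ker f` is a harmonic polar of the point `v` of the cubic hypersurface of `M`:
the polar quadric of `v` is the union of `ker f` and of the tangent hyperplane at `v`. The linear
form `f` is normalized so that the equation of the polar quadric is exactly the product. -/
structure IsHarmonicPolar (M : TrilinearForm R V) (v : V) (f : Dual R V) : Prop where
  cubic_eq_zero : M.cubic v = 0
  differential_apply_eq_mul : ∀ x, M.differential x v = f x * M.differential v x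

variable (M : TrilinearForm R V)

lemma differential_apply (x y : V) : M.differential x y = M x x y + M x y x + M y x x := rfl

lemma polar_apply (x y z : V) :
    M.polar x y z = M x y z + M y x z + M x z y + M y z x + M z x y + M z y x := rfl

lemma cubic_smul_add_smul (s t : R) (x y : V) :
    M.cubic (s • x + t • y) = s ^ 3 * M.cubic x + s ^ 2 * t * M.differential x y
      + s * t ^ 2 * M.differential y x + t ^ 3 * M.cubic y := by
  simp only [cubic, differential_apply, map_add, map_smul, LinearMap.add_apply,
    LinearMap.smul_apply, smul_eq_mul]
  ring

lemma differential_smul_add_smul (s t : R) (x y : V) :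
    M.differential (s • x + t • y) =
      s ^ 2 • M.differential x + (s * t) • M.polar x y + t ^ 2 • M.differential y := by
  ext z
  simp only [differential_apply, polar_apply, map_add, map_smul, LinearMap.add_apply,
    LinearMap.smul_apply, smul_eq_mul]
  ring

lemma differential_add (x y : V) :
    M.differential (x + y) = M.differential x + M.polar x y + M.differential y := by
  simpa using M.differential_smul_add_smul 1 1 x y

lemma differential_self (x : V) : M.differential x x = 3 * M.cubic x := by
  simp only [cubic, differential_apply]
  ring

lemma polar_comm (x y : V) : M.polar x y = M.polar y x := by
  ext z
  simp only [polar_apply]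
  ring

lemma polar_apply_rotate (x y z : V) : M.polar x y z = M.polar y z x := by
  simp only [polar_apply]
  ring

lemma cubic_preReflection (v : V) (f : Dual R V) (x : V) :
    M.cubic (preReflection v f x) = M.cubic x - f x * M.differential x v
      + f x ^ 2 * M.differential v x - f x ^ 3 * M.cubic v := by
  have h := M.cubic_smul_add_smul 1 (-f x) x v
  rw [one_smul, neg_smul, ← sub_eq_add_neg, ← preReflection_apply] at h
  rw [h]
  ring

variable {M}

lemma IsHarmonicPolar.polar_eq_smul {v w : V} {f : Dual R V} (hv : M.IsHarmonicPolar v f)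
    (hvw : M.differential v w = 0) : M.polar v w = f w • M.differential v := by
  ext x
  have h := hv.differential_apply_eq_mul (w + x)
  simp only [differential_add, map_add, LinearMap.add_apply, hvw, hv.differential_apply_eq_mul w,
    hv.differential_apply_eq_mul x] at h
  rw [M.polar_apply_rotate, LinearMap.smul_apply, smul_eq_mul]
  linear_combination h

lemma IsHarmonicPolar.cubic_eq_zero_of_mem_span_pair {v w : V} {f g : Dual R V}
    (hv : M.IsHarmonicPolar v f) (hw : M.IsHarmonicPolar w g) (hfw : f w = 0) (hgv : g v = 0)
    {x : V} (hx : x ∈ Submodule.span R {v, w}) : M.cubic x = 0 := by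
  obtain ⟨s, t, rfl⟩ := Submodule.mem_span_pair.mp hx
  rw [cubic_smul_add_smul, hv.cubic_eq_zero, hw.cubic_eq_zero, hv.differential_apply_eq_mul w,
    hw.differential_apply_eq_mul v, hfw, hgv]
  ring

end CommRing

section IsDomain

variable {R V : Type*} [CommRing R] [IsDomain R] [Infinite R] [AddCommGroup V] [Module R V]
  {M : TrilinearForm R V}

lemma differential_apply_eq_zero_of_forall_mem_cubic_eq_zero {W : Submodule R V}
    (hW : ∀ x ∈ W, M.cubic x = 0) {x y : V} (hx : x ∈ W) (hy : y ∈ W) :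
    M.differential x y = 0 := by
  refine eq_zero_of_forall_linear_add_sq_add_cube_eq_zero (b := M.differential y x)
    (c := 0) fun t ↦ ?_
  have h := M.cubic_smul_add_smul 1 t x y
  rw [hW _ (W.add_mem (W.smul_mem 1 hx) (W.smul_mem t hy)), hW x hx, hW y hy] at h
  linear_combination -h

lemma IsHarmonicPolar.of_cubic_preReflection {v : V} {f : Dual R V} (hf : f ≠ 0)
    (hfv : f v = 2) (hinv : ∀ x, M.cubic (preReflection v f x) = M.cubic x) :
    M.IsHarmonicPolar v f := by
  have hmul : ∀ x, f x * (M.differential x v - f x * M.differential v x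
      + f x ^ 2 * M.cubic v) = 0 := fun x ↦ by
    linear_combination M.cubic_preReflection v f x - hinv x
  have hpolar : ∀ x, M.differential x v - f x * M.differential v x + f x ^ 2 * M.cubic v = 0 := by
    intro x
    by_cases hx : f x = 0
    · -- Compare coefficients of `t` in `hmul (x + t • y)`, along a line transverse to the mirror.
      obtain ⟨y, hy⟩ := DFunLike.ne_iff.mp hf
      have h : f y * M.differential x v = 0 :=
        eq_zero_of_forall_linear_add_sq_add_cube_eq_zero
          (b := f y * M.polar x y v - f y ^ 2 * M.differential v x)
          (c := f y * M.differential y v - f y ^ 2 * M.differential v y + f y ^ 3 * M.cubic v)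
          fun t ↦ by
            have h := hmul ((1 : R) • x + t • y)
            simp only [differential_smul_add_smul, map_add, map_smul, LinearMap.add_apply,
              LinearMap.smul_apply, smul_eq_mul, hx] at h
            linear_combination h
      rw [(mul_eq_zero.mp h).resolve_left hy, hx]
      ring
    · exact (mul_eq_zero.mp (hmul x)).resolve_left hx
  have hv : M.cubic v = 0 := by
    have h := hpolar v
    rw [differential_self, hfv] at h
    linear_combination h
  exact ⟨hv, fun x ↦ by linear_combination hpolar x - f x ^ 2 * hv⟩

end IsDomain

section Field

variable {K V : Type*} [Field K] [AddCommGroup V] [Module K V] {M : TrilinearForm K V}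

lemma Nonsingular.exists_differential_notMem_span_singleton [IsAlgClosed K] (hM : M.Nonsingular)
    {W : Submodule K V} (hdim : 1 < finrank K W) (hW : ∀ x ∈ W, M.cubic x = 0) (l : Dual K V) :
    ∃ x ∈ W, M.differential x ∉ K ∙ l := by
  by_contra! hl
  have : Nontrivial W := nontrivial_of_finrank_pos (R := K) (by lia)
  obtain ⟨x, hx⟩ := exists_ne (0 : W)
  obtain ⟨y, hxy⟩ := exists_linearIndependent_pair_of_one_lt_finrank hdim hx
  obtain ⟨a, ha⟩ := Submodule.mem_span_singleton.mp (hl x x.2)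
  obtain ⟨c, hc⟩ := Submodule.mem_span_singleton.mp (hl y y.2)
  obtain ⟨d, hd⟩ := Submodule.mem_span_singleton.mp (hl (x + y) (x + y).2)
  have hb : M.polar x y = (d - a - c) • l := by
    have h := M.differential_add x y
    rw [← ha, ← hc, ← hd] at h
    linear_combination (norm := module) -h
  obtain ⟨s, t, hst, hq⟩ := exists_nontrivial_zero_binary_quadratic a (d - a - c) c
  have hsing : M.differential (s • x + t • y : W) = 0 := by
    rw [W.coe_add, W.coe_smul, W.coe_smul, differential_smul_add_smul, ← ha, ← hc, hb, smul_smul,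
      smul_smul, smul_smul, ← add_smul, ← add_smul, hq, zero_smul]
  have hzero : s • x + t • y = 0 := by
    simpa only [ZeroMemClass.coe_eq_zero] using hM _ (hW _ (s • x + t • y).2) hsing
  exact hst (LinearIndependent.pair_iff.mp hxy s t hzero)

lemma Nonsingular.exists_mem_ker_cubic_ne_zero [IsAlgClosed K] (hM : M.Nonsingular)
    (hdim : 3 ≤ finrank K V) {f : Dual K V} (hf : f ≠ 0) :
    ∃ x ∈ LinearMap.ker f, M.cubic x ≠ 0 := by
  by_contra! hker
  have : FiniteDimensional K V := .of_finrank_pos (by lia)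
  have := Dual.finrank_ker_add_one_of_ne_zero hf
  have := IsAlgClosed.instInfinite (K := K)
  obtain ⟨x, hx, hfx⟩ := hM.exists_differential_notMem_span_singleton
    (W := LinearMap.ker f) (by lia) hker f
  refine hfx ?_
  have h := mem_span_of_iInf_ker_le_ker (L := fun _ : Unit ↦ f) (K := M.differential x) <| by
    rw [iInf_const]
    exact fun y hy ↦ differential_apply_eq_zero_of_forall_mem_cubic_eq_zero hker hx hy
  simpa using h

lemma Nonsingular.eq_one_of_cubic_preReflection [IsAlgClosed K] (hM : M.Nonsingular)
    (hdim : 3 ≤ finrank K V) {v : V} {f : Dual K V} (hf : f ≠ 0) {c : K}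
    (hinv : ∀ x, M.cubic (preReflection v f x) = c * M.cubic x) : c = 1 := by
  obtain ⟨x, hx, hx0⟩ := hM.exists_mem_ker_cubic_ne_zero hdim hf
  have h := hinv x
  rw [preReflection_apply, LinearMap.mem_ker.mp hx, zero_smul, sub_zero] at h
  exact (mul_eq_right₀ hx0).mp h.symm

lemma Nonsingular.isHarmonicPolar [IsAlgClosed K] (hM : M.Nonsingular) (hdim : 3 ≤ finrank K V)
    {v : V} {f : Dual K V} (hf : f ≠ 0) (hfv : f v = 2)
    (hinv : ∃ c : K, ∀ x, M.cubic (preReflection v f x) = c * M.cubic x) :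
    M.IsHarmonicPolar v f := by
  obtain ⟨c, hc⟩ := hinv
  obtain rfl := hM.eq_one_of_cubic_preReflection hdim hf hc
  have := IsAlgClosed.instInfinite (K := K)
  exact .of_cubic_preReflection hf hfv fun x ↦ by rw [hc, one_mul]

lemma IsHarmonicPolar.apply_eq_zero_of_cubic_eq_zero [IsAlgClosed K] (hM : M.Nonsingular)
    {v w : V} {f g : Dual K V} (hv : M.IsHarmonicPolar v f) (hw : M.IsHarmonicPolar w g)
    (hvw : LinearIndependent K ![v, w]) (hline : ∀ x ∈ Submodule.span K {v, w}, M.cubic x = 0) :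
    f w = 0 := by
  by_contra hfw
  have := IsAlgClosed.instInfinite (K := K)
  have hvW : v ∈ Submodule.span K {v, w} := Submodule.subset_span (by simp)
  have hwW : w ∈ Submodule.span K {v, w} := Submodule.subset_span (by simp)
  have hpv : M.polar v w = f w • M.differential v :=
    hv.polar_eq_smul (differential_apply_eq_zero_of_forall_mem_cubic_eq_zero hline hvW hwW)
  have hpw : M.polar v w = g v • M.differential w := by
    rw [polar_comm, hw.polar_eq_smul
      (differential_apply_eq_zero_of_forall_mem_cubic_eq_zero hline hwW hvW)]
  have hprop : M.differential v = ((f w)⁻¹ * g v) • M.differential w := by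
    rw [mul_smul, ← hpw, hpv, inv_smul_smul₀ hfw]
  have hdim : finrank K (Submodule.span K {v, w}) = 2 := by
    rw [← Matrix.range_cons_cons_empty v w ![]]
    exact finrank_span_eq_card hvw
  obtain ⟨x, hx, hxw⟩ := hM.exists_differential_notMem_span_singleton (by lia) hline
    (M.differential w)
  obtain ⟨s, t, rfl⟩ := Submodule.mem_span_pair.mp hx
  refine hxw (Submodule.mem_span_singleton.mpr ⟨s ^ 2 * ((f w)⁻¹ * g v) + s * t * g v + t ^ 2, ?_⟩)
  rw [differential_smul_add_smul, hpw, hprop]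
  module

lemma IsHarmonicPolar.forall_mem_span_pair_cubic_eq_zero_iff [IsAlgClosed K] (hM : M.Nonsingular)
    {v w : V} {f g : Dual K V} (hv : M.IsHarmonicPolar v f) (hw : M.IsHarmonicPolar w g)
    (hvw : LinearIndependent K ![v, w]) :
    (∀ x ∈ Submodule.span K {v, w}, M.cubic x = 0) ↔ f w = 0 ∧ g v = 0 := by
  refine ⟨fun h ↦ ⟨hv.apply_eq_zero_of_cubic_eq_zero hM hw hvw h,
    hw.apply_eq_zero_of_cubic_eq_zero hM hv ?_ ?_⟩,
    fun h x ↦ hv.cubic_eq_zero_of_mem_span_pair hw h.1 h.2⟩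
  · exact LinearIndependent.pair_symm_iff.mp hvw
  · rwa [Set.pair_comm]

end Field

section Polynomial

variable {R σ : Type*} [CommRing R] [DecidableEq σ]

/-- `M` represents the polynomial `F`: as functions on `σ → R`, `F` and its partial derivatives are
the cubic form of `M` and the coordinates of its differential. This carries statements about `F`
over to coordinate-free statements about `M`. -/
structure Represents (M : TrilinearForm R (σ → R)) (F : MvPolynomial σ R) : Prop where
  eval_eq : ∀ x, eval x F = M.cubic x
  eval_pderiv_eq : ∀ x i, eval x (pderiv i F) = M.differential x (Pi.single i 1)

lemma represents_zero : Represents (0 : TrilinearForm R (σ → R)) 0 :=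
  ⟨fun _ ↦ by simp [cubic], fun _ _ ↦ by simp [differential_apply]⟩

lemma Represents.add {M N : TrilinearForm R (σ → R)} {F G : MvPolynomial σ R}
    (hM : M.Represents F) (hN : N.Represents G) : Represents (M + N) (F + G) where
  eval_eq x := by simp [hM.eval_eq, hN.eval_eq, cubic]
  eval_pderiv_eq x i := by
    simp only [map_add, hM.eval_pderiv_eq, hN.eval_pderiv_eq, differential_apply,
      LinearMap.add_apply]
    ring

lemma Represents.smul {M : TrilinearForm R (σ → R)} {F : MvPolynomial σ R} (c : R)
    (hM : M.Represents F) : Represents (c • M) (c • F) where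
  eval_eq x := by simp [hM.eval_eq, cubic, smul_eval]
  eval_pderiv_eq x i := by
    simp only [Derivation.map_smul, smul_eval, hM.eval_pderiv_eq, differential_apply,
      LinearMap.smul_apply, smul_eq_mul]
    ring

lemma represents_X_mul_X_mul_X (i j l : σ) :
    Represents ((LinearMap.proj i).smulRight ((LinearMap.proj j).smulRight (LinearMap.proj l)))
      (X i * X j * X l : MvPolynomial σ R) where
  eval_eq x := by simp [cubic, mul_assoc]
  eval_pderiv_eq x m := by
    simp only [Derivation.leibniz, pderiv_X, differential_apply, LinearMap.smulRight_apply,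
      LinearMap.proj_apply, LinearMap.smul_apply, Pi.single_apply, smul_eq_mul, map_add, map_mul,
      eval_X, apply_ite (eval x), map_one, map_zero]
    ring

open scoped Pointwise in
lemma exists_represents_of_isHomogeneous {F : MvPolynomial σ R} (hF : F.IsHomogeneous 3) :
    ∃ M : TrilinearForm R (σ → R), M.Represents F := by
  rw [← mem_homogeneousSubmodule, ← homogeneousSubmodule_one_pow,
    homogeneousSubmodule_one_eq_span_X, Submodule.span_pow] at hF
  refine Submodule.span_induction (p := fun G _ ↦ ∃ M : TrilinearForm R (σ → R), M.Represents G)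
    ?_ ?_ ?_ ?_ hF
  · intro G hG
    simp only [pow_succ, pow_zero, one_mul, Set.mem_mul, Set.mem_range] at hG
    obtain ⟨_, ⟨_, ⟨i, rfl⟩, _, ⟨j, rfl⟩, rfl⟩, _, ⟨l, rfl⟩, rfl⟩ := hG
    exact ⟨_, represents_X_mul_X_mul_X i j l⟩
  · exact ⟨0, represents_zero⟩
  · rintro F G _ _ ⟨M, hM⟩ ⟨N, hN⟩
    exact ⟨M + N, hM.add hN⟩
  · rintro c F _ ⟨M, hM⟩
    exact ⟨c • M, hM.smul c⟩

lemma Represents.nonsingular {M : TrilinearForm R (σ → R)} {F : MvPolynomial σ R}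
    (hM : M.Represents F)
    (hF : ∀ x, eval x F = 0 → (∀ i, eval x (pderiv i F) = 0) → x = 0) : M.Nonsingular :=
  fun x hx hdx ↦ hF x (by rw [hM.eval_eq, hx]) fun i ↦ by
    rw [hM.eval_pderiv_eq, hdx, LinearMap.zero_apply]

end Polynomial

end TrilinearForm

section Reflections

lemma commute_preReflection_iff {R V : Type*} [CommRing R] [IsDomain R] [AddCommGroup V]
    [Module R V] {v w : V} {f g : Dual R V} (hf : f ≠ 0) (hg : g ≠ 0)
    (hvw : LinearIndependent R ![v, w]) :
    Commute (preReflection v f) (preReflection w g) ↔ f w = 0 ∧ g v = 0 := by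
  have hcomm : Commute (preReflection v f) (preReflection w g) ↔
      ∀ x, (g x * f w) • v + (-(f x * g v)) • w = 0 := by
    rw [commute_iff_eq, LinearMap.ext_iff]
    refine forall_congr' fun x ↦ ?_
    rw [← sub_eq_zero]
    simp only [End.mul_apply, preReflection_apply, map_sub, map_smul]
    congr! 1
    module
  rw [hcomm]
  constructor
  · intro h
    have hzero x : g x * f w = 0 ∧ -(f x * g v) = 0 :=
      LinearIndependent.pair_iff.mp hvw _ _ (h x)
    obtain ⟨x, hx⟩ := DFunLike.ne_iff.mp hg
    obtain ⟨y, hy⟩ := DFunLike.ne_iff.mp hf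
    exact ⟨(mul_eq_zero.mp (hzero x).1).resolve_left hx,
      (mul_eq_zero.mp (neg_eq_zero.mp (hzero y).2)).resolve_left hy⟩
  · rintro ⟨hfw, hgv⟩ x
    simp [hfw, hgv]

variable {K V : Type*} [Field K] [AddCommGroup V] [Module K V]

lemma exists_eq_smulRight_of_finrank_range_eq_one {W : Type*} [AddCommGroup W] [Module K W]
    {T : V →ₗ[K] W} (hT : finrank K (LinearMap.range T) = 1) :
    ∃ (f : Dual K V) (w : W), f ≠ 0 ∧ w ≠ 0 ∧ T = f.smulRight w := by
  obtain ⟨w, hw0, hw⟩ := finrank_eq_one_iff'.mp hT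
  have hw0' : (w : W) ≠ 0 := by simpa using hw0
  have hmem x : T x ∈ K ∙ (w : W) := by
    obtain ⟨c, hc⟩ := hw ⟨T x, x, rfl⟩
    exact Submodule.mem_span_singleton.mpr ⟨c, congrArg Subtype.val hc⟩
  have hTf : T = ((LinearEquiv.coord K W (w : W) hw0').toLinearMap ∘ₗ
      T.codRestrict (K ∙ (w : W)) hmem).smulRight (w : W) := by
    ext x
    simp
  refine ⟨_, w, fun hf ↦ ?_, hw0', hTf⟩
  have hT0 : T = 0 := by rw [hTf, hf]; ext; simp
  rw [hT0, LinearMap.range_zero, finrank_bot] at hT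
  exact zero_ne_one hT

lemma exists_eq_preReflection {T : End K V} (hsq : T * T = 1)
    (hrk : finrank K (LinearMap.range (T - 1)) = 1) :
    ∃ (v : V) (f : Dual K V), v ≠ 0 ∧ f ≠ 0 ∧ f v = 2 ∧ T = preReflection v f ∧
      LinearMap.range (T - 1) = K ∙ v := by
  obtain ⟨f, v, hf, hv, hT⟩ := exists_eq_smulRight_of_finrank_range_eq_one hrk
  have hTf : T = preReflection v (-f) := by
    ext x
    have hx : T x - x = f x • v := LinearMap.congr_fun hT x
    rw [preReflection_apply, LinearMap.neg_apply, neg_smul, sub_neg_eq_add, ← hx]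
    abel
  refine ⟨v, -f, hv, neg_ne_zero.mpr hf, ?_, hTf, ?_⟩
  · obtain ⟨x, hx⟩ := DFunLike.ne_iff.mp hf
    have hxx : f x • (2 + f v) • v = 0 := by
      have h := LinearMap.congr_fun hsq x
      simp only [hTf, End.mul_apply, End.one_apply, preReflection_apply, map_sub, map_smul,
        LinearMap.neg_apply] at h
      rw [← sub_eq_zero] at h
      rw [← h]
      module
    have h2 : 2 + f v = 0 :=
      (smul_eq_zero.mp ((smul_eq_zero.mp hxx).resolve_left hx)).resolve_right hv
    rw [LinearMap.neg_apply]
    linear_combination -h2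
  · rw [hT, LinearMap.range_smulRight_apply hf]

lemma linearIndependent_pair_of_span_singleton_ne {v w : V} (hv : v ≠ 0) (hw : w ≠ 0)
    (hvw : K ∙ v ≠ K ∙ w) : LinearIndependent K ![v, w] := by
  refine (LinearIndependent.pair_iff' hv).mpr fun a ha ↦ hvw ?_
  have ha0 : a ≠ 0 := by
    rintro rfl
    exact hw (by rw [← ha, zero_smul])
  rw [← ha, Submodule.span_singleton_smul_eq ha0.isUnit]

lemma exists_ne_zero_preReflection_apply_eq_self (v w : V) (f g : Dual K V)
    (hdim : 3 ≤ finrank K V) :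
    ∃ x ≠ 0, preReflection v f x = x ∧ preReflection w g x = x := by
  have hker : LinearMap.ker (f.prod g) ≠ ⊥ :=
    have : FiniteDimensional K V := .of_finrank_pos (by lia)
    LinearMap.ker_ne_bot_of_finrank_lt (by simpa using (show 2 < finrank K V from hdim))
  obtain ⟨x, hx, hx0⟩ := Submodule.exists_mem_ne_zero_of_ne_bot hker
  have hfg : f x = 0 ∧ g x = 0 := by simpa using hx
  exact ⟨x, hx0, by simp [preReflection_apply, hfg], by simp [preReflection_apply, hfg]⟩

end Reflections

section Matrices

variable {R n : Type*} [CommRing R] [Fintype n] [DecidableEq n]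

lemma exists_commutator_eq_smul_one_iff_commute [IsDomain R] {A B : Matrix n n R} (hA : IsUnit A)
    (hB : IsUnit B) {x : n → R} (hx : x ≠ 0) (hAx : A *ᵥ x = x) (hBx : B *ᵥ x = x) :
    (∃ c : R, A * B * A⁻¹ * B⁻¹ = c • (1 : Matrix n n R)) ↔ Commute A B := by
  have hcomm (c : R) : A * B * A⁻¹ * B⁻¹ = c • (1 : Matrix n n R) ↔ A * B = c • (B * A) := by
    have := hA.invertible
    have := hB.invertible
    rw [mul_inv_eq_iff_eq_mul_of_invertible, mul_inv_eq_iff_eq_mul_of_invertible, smul_mul_assoc,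
      smul_mul_assoc, one_mul]
  simp only [hcomm]
  constructor
  · rintro ⟨c, hc⟩
    have hcx : (1 : R) • x = c • x := by
      simpa [← Matrix.mulVec_mulVec, Matrix.smul_mulVec, hAx, hBx] using congrArg (· *ᵥ x) hc
    rw [commute_iff_eq, hc, ← smul_left_injective R hx hcx, one_smul]
  · exact fun h ↦ ⟨1, by rw [one_smul, h.eq]⟩

lemma commute_toLin'_iff {A B : Matrix n n R} : Commute A.toLin' B.toLin' ↔ Commute A B :=
  commute_map_iff Matrix.toLinAlgEquiv'.injective

lemma exists_toLin'_eq_preReflection {K : Type*} [Field K] {A : Matrix n n K} (hsq : A * A = 1)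
    (hrk : (A - 1).rank = 1) :
    ∃ (v : n → K) (f : Dual K (n → K)), v ≠ 0 ∧ f ≠ 0 ∧ f v = 2 ∧ A.toLin' = preReflection v f ∧
      LinearMap.range (A - 1).mulVecLin = K ∙ v := by
  have hsub : A.toLin' - 1 = (A - 1).mulVecLin := by
    rw [← Matrix.toLin'_apply', map_sub, Matrix.toLin'_one]
    rfl
  rw [← hsub]
  refine exists_eq_preReflection ?_ ?_
  · rw [End.mul_eq_comp, ← Matrix.toLin'_mul, hsq, Matrix.toLin'_one]
    rfl
  · rw [hsub]
    exact hrk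

end Matrices

lemma eval_substMatrix {k : Type*} [Field k] (A : Matrix (Fin 4) (Fin 4) k)
    (F : MvPolynomial (Fin 4) k) (x : Fin 4 → k) :
    eval x (substMatrix A F) = eval (A *ᵥ x) F := by
  have hsubst : (aeval x).comp (aeval fun i ↦ ∑ j, C (A i j) * X j) =
      (aeval (A *ᵥ x) : MvPolynomial (Fin 4) k →ₐ[k] k) := by
    ext i
    simp [Matrix.mulVec, dotProduct]
  exact DFunLike.congr_fun hsubst F

lemma LeavesInvariant.exists_eval_mulVec {k : Type*} [Field k] {A : Matrix (Fin 4) (Fin 4) k}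
    {F : MvPolynomial (Fin 4) k} (hA : LeavesInvariant A F) :
    ∃ c : k, ∀ x, eval (A *ᵥ x) F = c * eval x F := by
  obtain ⟨c, hc⟩ := hA
  exact ⟨c, fun x ↦ by rw [← eval_substMatrix, hc, smul_eval]⟩

theorem stmt4_general {k σ : Type*} [Field k] [IsAlgClosed k] [Fintype σ] [DecidableEq σ]
    (hσ : 3 ≤ Fintype.card σ) (F : MvPolynomial σ k) (hhom : F.IsHomogeneous 3)
    (hsmooth : ∀ x : σ → k, eval x F = 0 → (∀ i, eval x (pderiv i F) = 0) → x = 0)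
    (A₁ A₂ : Matrix σ σ k)
    (h₁sq : A₁ * A₁ = 1) (h₁rk : (A₁ - 1).rank = 1)
    (h₂sq : A₂ * A₂ = 1) (h₂rk : (A₂ - 1).rank = 1)
    (h₁inv : ∃ c : k, ∀ x, eval (A₁ *ᵥ x) F = c * eval x F)
    (h₂inv : ∃ c : k, ∀ x, eval (A₂ *ᵥ x) F = c * eval x F)
    (hcenters : LinearMap.range (A₁ - 1).mulVecLin ≠ LinearMap.range (A₂ - 1).mulVecLin) :
    (∃ c : k, A₁ * A₂ * A₁⁻¹ * A₂⁻¹ = c • (1 : Matrix σ σ k)) ↔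
      ∀ x ∈ LinearMap.range (A₁ - 1).mulVecLin ⊔ LinearMap.range (A₂ - 1).mulVecLin,
        eval x F = 0 := by
  have hdim : 3 ≤ finrank k (σ → k) := by rwa [finrank_fintype_fun_eq_card]
  obtain ⟨M, hM⟩ := TrilinearForm.exists_represents_of_isHomogeneous hhom
  have hns : M.Nonsingular := hM.nonsingular hsmooth
  obtain ⟨v, f, hv, hf, hfv, hA₁, hr₁⟩ := exists_toLin'_eq_preReflection h₁sq h₁rk
  obtain ⟨w, g, hw, hg, hgw, hA₂, hr₂⟩ := exists_toLin'_eq_preReflection h₂sq h₂rk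
  rw [hr₁, hr₂] at hcenters
  have hvw := linearIndependent_pair_of_span_singleton_ne hv hw hcenters
  simp only [← Matrix.toLin'_apply, hM.eval_eq, hA₁] at h₁inv
  simp only [← Matrix.toLin'_apply, hM.eval_eq, hA₂] at h₂inv
  have hpv : M.IsHarmonicPolar v f := hns.isHarmonicPolar hdim hf hfv h₁inv
  have hpw : M.IsHarmonicPolar w g := hns.isHarmonicPolar hdim hg hgw h₂inv
  obtain ⟨x, hx, hfx, hgx⟩ := exists_ne_zero_preReflection_apply_eq_self v w f g hdim
  rw [← hA₁, Matrix.toLin'_apply] at hfx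
  rw [← hA₂, Matrix.toLin'_apply] at hgx
  simp only [hr₁, hr₂, ← Submodule.span_insert, hM.eval_eq]
  rw [exists_commutator_eq_smul_one_iff_commute (.of_mul_eq_one _ h₁sq) (.of_mul_eq_one _ h₂sq)
      hx hfx hgx, ← commute_toLin'_iff, hA₁, hA₂, commute_preReflection_iff hf hg hvw,
    hpv.forall_mem_span_pair_cubic_eq_zero_iff hns hpw hvw]

/-- Two reflections of a smooth cubic surface with distinct
centers commute in `PGL₄(k)` (i.e. their commutator is a scalar matrix) if and
only if the projective line through their centers is contained in the surface. -/
theorem stmt4 {k : Type*} [Field k] [IsAlgClosed k]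
    (F : MvPolynomial (Fin 4) k) (hF0 : F ≠ 0) (hhom : F.IsHomogeneous 3)
    (hsmooth : ∀ x : Fin 4 → k,
      eval x F = 0 → (∀ i, eval x (pderiv i F) = 0) → x = 0)
    (A₁ A₂ : Matrix (Fin 4) (Fin 4) k)
    (h₁sq : A₁ * A₁ = 1) (h₁rk : (A₁ - 1).rank = 1)
    (h₂sq : A₂ * A₂ = 1) (h₂rk : (A₂ - 1).rank = 1)
    (h₁inv : LeavesInvariant A₁ F) (h₂inv : LeavesInvariant A₂ F)
    (hcenters : LinearMap.range (A₁ - 1).mulVecLin ≠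
      LinearMap.range (A₂ - 1).mulVecLin) :
    (∃ c : k, A₁ * A₂ * A₁⁻¹ * A₂⁻¹ = c • (1 : Matrix (Fin 4) (Fin 4) k)) ↔
      VanishesOn F
        (LinearMap.range (A₁ - 1).mulVecLin ⊔ LinearMap.range (A₂ - 1).mulVecLin) := by
  exact stmt4_general (by simp) F hhom hsmooth A₁ A₂ h₁sq h₁rk h₂sq h₂rk
    h₁inv.exists_eval_mulVec h₂inv.exists_eval_mulVec hcenters
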